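/- arXiv:2010.02490 — 3 statements merged into one kernel-verified Lean document; each statement's English description precedes it below -/
import Mathlib

section
/- Define, for a positive integer n, W_B(n) = cos(π/n − (1/2)·arcsin((1/2)·sin(2π/n))) and U_W(n) = cos(π/(2n)). Then, as n → ∞ over the positive integers, U_W(n) − W_B(n) = π⁴/(8n⁴) + 11π⁶/(192n⁶) + O(1/n⁸); that is, the function n ↦ cos(π/(2n)) − cos(π/n − (1/2)·arcsin((1/2)·sin(2π/n))) − π⁴/(8n⁴) − 11π⁶/(192n⁶) is O(n⁻⁸) along the filter atTop. -/
open Real Filter Asymptotics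

/-!
Put `x = π / n` and write the angle in `W_B(n)` as `x / 2 + δ`. Taking the sine of the arcsine in
the definition of `δ` gives `cos (x - δ) * sin δ = sin x * sin (x / 2) ^ 2`, which determines
`δ = x³ / 4 + x⁵ / 16 + O(x⁷)`. The gap factors as `2 * sin ((x + δ) / 2) * sin (δ / 2)`; the
factors are of order `x` and `x³`, so expanding each to relative precision `O(x⁴)` suffices for an
error of `O(x⁸)`, and this takes only the cubic Taylor polynomials of `sin` and `cos`.
-/

open scoped Topology

section IsBigO

variable {α R 𝕜 : Type*} [NormedField 𝕜]

lemma isBigO_div_const_self (f : α → 𝕜) (c : 𝕜) (l : Filter α) :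
    (fun x => f x / c) =O[l] f :=
  (isBigO_const_mul_self c⁻¹ f l).congr_left fun x => by rw [div_eq_inv_mul]

lemma isBigO_mul_of_continuousAt [TopologicalSpace α] {a : α} {v : α → 𝕜} (u : α → 𝕜)
    (hv : ContinuousAt v a) : (fun x => u x * v x) =O[𝓝 a] u := by
  simpa only [mul_one] using (isBigO_refl u (𝓝 a)).mul (hv.isBigO_one 𝕜)

lemma isBigO_mul_sub_mul_pow [SeminormedRing R] {l : Filter α} {f f' g g' : α → R} {s : α → 𝕜}
    {m n k : ℕ} (hf : f =O[l] fun x => s x ^ m)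
    (hff' : (fun x => f x - f' x) =O[l] fun x => s x ^ (m + k))
    (hg' : g' =O[l] fun x => s x ^ n)
    (hgg' : (fun x => g x - g' x) =O[l] fun x => s x ^ (n + k)) :
    (fun x => f x * g x - f' x * g' x) =O[l] fun x => s x ^ (m + n + k) := by
  have left_error : (fun x => (f x - f' x) * g' x) =O[l] fun x => s x ^ (m + n + k) :=
    (hff'.mul hg').congr_right fun x => by ring
  have right_error : (fun x => f x * (g x - g' x)) =O[l] fun x => s x ^ (m + n + k) :=
    (hf.mul hgg').congr_right fun x => by ring
  exact (left_error.add right_error).congr_left fun x => by noncomm_ring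

end IsBigO

section Taylor

lemma eventually_abs_le_one : ∀ᶠ y : ℝ in 𝓝 0, |y| ≤ 1 :=
  (continuous_abs.tendsto' 0 0 abs_zero).eventually_le_const one_pos

lemma isBigO_sin_comp {α : Type*} (l : Filter α) (f : α → ℝ) : (fun x => sin (f x)) =O[l] f :=
  isBigO_of_le l fun _ => abs_sin_le_abs

lemma sin_sub_cubic_isBigO : (fun y : ℝ => sin y - (y - y ^ 3 / 6)) =O[𝓝 0] (· ^ 5) := by
  refine IsBigO.of_bound (1 / 100) ?_
  filter_upwards [eventually_abs_le_one] with y hy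
  rw [norm_eq_abs, norm_pow, norm_eq_abs]
  linarith [sin_bound hy]

lemma cos_sub_quadratic_isBigO : (fun y : ℝ => cos y - (1 - y ^ 2 / 2)) =O[𝓝 0] (· ^ 4) := by
  refine IsBigO.of_bound (5 / 96) ?_
  filter_upwards [eventually_abs_le_one] with y hy
  rw [norm_eq_abs, norm_pow, norm_eq_abs]
  linarith [cos_bound hy]

lemma sin_sub_self_isBigO : (fun y : ℝ => sin y - y) =O[𝓝 0] (· ^ 3) := by
  have cubic_term : (fun y : ℝ => y ^ 3 / 6) =O[𝓝 0] (· ^ 3) :=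
    isBigO_div_const_self (· ^ 3) 6 _
  have remainder := sin_sub_cubic_isBigO.trans (isLittleO_pow_pow (by norm_num : 3 < 5)).isBigO
  exact (remainder.sub cubic_term).congr_left fun y => by ring

lemma sin_mul_sin_half_sq_isBigO :
    (fun x : ℝ => sin x * sin (x / 2) ^ 2) =O[𝓝 0] (· ^ 3) := by
  have sin_half : (fun x : ℝ => sin (x / 2)) =O[𝓝 0] (fun x => x) :=
    (isBigO_sin_comp _ _).trans (isBigO_div_const_self (fun x => x) 2 _)
  exact ((isBigO_sin_comp _ (fun x => x)).mul (sin_half.pow 2)).congr_right fun x => by ring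

lemma sin_half_sub_cubic_isBigO :
    (fun x : ℝ => sin (x / 2) - (x / 2 - x ^ 3 / 48)) =O[𝓝 0] (· ^ 5) := by
  have half_tendsto : Tendsto (fun x : ℝ => x / 2) (𝓝 0) (𝓝 0) :=
    Continuous.tendsto' (by fun_prop) _ _ (zero_div 2)
  have half_pow_isBigO : (fun x : ℝ => (x / 2) ^ 5) =O[𝓝 0] (· ^ 5) :=
    (isBigO_div_const_self (fun x => x) 2 _).pow 5
  exact ((sin_sub_cubic_isBigO.comp_tendsto half_tendsto).trans half_pow_isBigO).congr_left
    fun x => by simp only [Function.comp_apply]; ring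

lemma sin_mul_sin_half_sq_sub_isBigO :
    (fun x : ℝ => sin x * sin (x / 2) ^ 2 - (x ^ 3 / 4 - x ^ 5 / 16)) =O[𝓝 0] (· ^ 7) := by
  have sin_isBigO : sin =O[𝓝 0] (· ^ 1) := by
    simpa only [pow_one] using isBigO_sin_comp (𝓝 0) fun x => x
  have sin_half_isBigO : (fun x => sin (x / 2)) =O[𝓝 0] (· ^ 1) := by
    simpa only [pow_one] using (isBigO_sin_comp (𝓝 0) _).trans (isBigO_div_const_self _ 2 _)
  have cubic_isBigO : (fun x : ℝ => x / 2 - x ^ 3 / 48) =O[𝓝 0] (· ^ 1) :=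
    (isBigO_mul_of_continuousAt (v := fun x => 1 / 2 - x ^ 2 / 48) (· ^ 1)
      (by fun_prop)).congr_left fun x => by ring
  have sin_half_sq : (fun x : ℝ => sin (x / 2) * sin (x / 2) -
      (x / 2 - x ^ 3 / 48) * (x / 2 - x ^ 3 / 48)) =O[𝓝 0] (· ^ 6) :=
    isBigO_mul_sub_mul_pow (m := 1) (n := 1) (k := 4)
      sin_half_isBigO sin_half_sub_cubic_isBigO cubic_isBigO sin_half_sub_cubic_isBigO
  have product : (fun x : ℝ => sin x * (sin (x / 2) * sin (x / 2)) -
      (x - x ^ 3 / 6) * ((x / 2 - x ^ 3 / 48) * (x / 2 - x ^ 3 / 48))) =O[𝓝 0] (· ^ 7) :=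
    isBigO_mul_sub_mul_pow (m := 1) (n := 2) (k := 4) sin_isBigO sin_sub_cubic_isBigO
      ((cubic_isBigO.mul cubic_isBigO).congr_right fun x => by ring) sin_half_sq
  have truncation : (fun x : ℝ => x ^ 7 * (1 / 256 - x ^ 2 / 13824)) =O[𝓝 0] (· ^ 7) :=
    isBigO_mul_of_continuousAt (· ^ 7) (by fun_prop)
  exact (product.add truncation).congr_left fun x => by ring

end Taylor

/-- The excess `δ` over `x / 2` of the angle `x - arcsin (sin (2 * x) / 2) / 2` whose cosine, at
`x = π / n`, is the width `W_B(n)`. -/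
noncomputable def angleExcess (x : ℝ) : ℝ :=
  (x - arcsin (1 / 2 * sin (2 * x))) / 2

section AngleExcess

lemma sin_sub_two_mul_angleExcess (x : ℝ) :
    sin (x - 2 * angleExcess x) = 1 / 2 * sin (2 * x) := by
  have arcsin_eq : x - 2 * angleExcess x = arcsin (1 / 2 * sin (2 * x)) := by
    unfold angleExcess; ring
  rw [arcsin_eq, sin_arcsin] <;> linarith [neg_one_le_sin (2 * x), sin_le_one (2 * x)]

lemma cos_mul_sin_angleExcess (x : ℝ) :
    cos (x - angleExcess x) * sin (angleExcess x) = sin x * sin (x / 2) ^ 2 := by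
  have product_to_difference : 2 * sin (angleExcess x) * cos (x - angleExcess x) =
      sin x - sin (x - 2 * angleExcess x) := by
    rw [sin_sub_sin, show (x - (x - 2 * angleExcess x)) / 2 = angleExcess x by ring,
      show (x + (x - 2 * angleExcess x)) / 2 = x - angleExcess x by ring]
  have half_angle : sin (x / 2) ^ 2 = 1 / 2 - cos x / 2 := by
    rw [sin_sq_eq_half_sub, mul_div_cancel₀ x two_ne_zero]
  rw [sin_sub_two_mul_angleExcess, sin_two_mul] at product_to_difference
  rw [half_angle]
  linarith

lemma tendsto_angleExcess : Tendsto angleExcess (𝓝 0) (𝓝 0) :=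
  Continuous.tendsto' (by unfold angleExcess; fun_prop) _ _ (by simp [angleExcess])

lemma angleExcess_isBigO_cube : angleExcess =O[𝓝 0] (· ^ 3) := by
  have cos_tendsto : Tendsto (fun x => cos (x - angleExcess x)) (𝓝 0) (𝓝 1) := by
    simpa [Function.comp_def] using
      (continuous_cos.tendsto (0 - 0)).comp (tendsto_id.sub tendsto_angleExcess)
  have one_isBigO_cos : (fun _ => (1 : ℝ)) =O[𝓝 0] fun x => cos (x - angleExcess x) :=
    ((isEquivalent_const_iff_tendsto one_ne_zero).2 cos_tendsto).isBigO_symm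
  calc angleExcess
      =O[𝓝 0] fun x => sin (angleExcess x) :=
        (isEquivalent_sin.comp_tendsto tendsto_angleExcess).isBigO_symm
    _ =O[𝓝 0] fun x => cos (x - angleExcess x) * sin (angleExcess x) :=
        (one_isBigO_cos.mul (isBigO_refl _ _)).congr_left fun x => one_mul _
    _ = fun x => sin x * sin (x / 2) ^ 2 := funext cos_mul_sin_angleExcess
    _ =O[𝓝 0] (· ^ 3) := sin_mul_sin_half_sq_isBigO

lemma angleExcess_isBigO_self : angleExcess =O[𝓝 0] (fun x => x) :=
  angleExcess_isBigO_cube.trans <| by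
    simpa using (isLittleO_pow_pow (𝕜 := ℝ) (by norm_num : 1 < 3)).isBigO

lemma half_add_angleExcess_isBigO_self :
    (fun x => (x + angleExcess x) / 2) =O[𝓝 0] (fun x => x) :=
  (isBigO_div_const_self _ 2 _).trans ((isBigO_refl _ _).add angleExcess_isBigO_self)

lemma cos_sub_angleExcess_isBigO :
    (fun x => cos (x - angleExcess x) - (1 - x ^ 2 / 2)) =O[𝓝 0] (· ^ 4) := by
  have sub_tendsto : Tendsto (fun x => x - angleExcess x) (𝓝 0) (𝓝 0) := by
    simpa using tendsto_id.sub tendsto_angleExcess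
  have sub_isBigO : (fun x => x - angleExcess x) =O[𝓝 0] (fun x => x) :=
    (isBigO_refl _ _).sub angleExcess_isBigO_self
  have taylor : (fun x => cos (x - angleExcess x) - (1 - (x - angleExcess x) ^ 2 / 2))
      =O[𝓝 0] (· ^ 4) :=
    (cos_sub_quadratic_isBigO.comp_tendsto sub_tendsto).trans (sub_isBigO.pow 4)
  have square_error :
      (fun x => angleExcess x * (x + (x - angleExcess x)) / 2) =O[𝓝 0] (· ^ 4) :=
    ((angleExcess_isBigO_cube.mul ((isBigO_refl _ _).add sub_isBigO)).const_mul_left (1 / 2)).congr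
      (fun x => by ring) fun x => by ring
  exact (taylor.add square_error).congr_left fun x => by ring

lemma sin_angleExcess_div_sub_isBigO (c : ℝ) :
    (fun x => sin (angleExcess x / c) - angleExcess x / c) =O[𝓝 0] (· ^ 7) := by
  have div_tendsto : Tendsto (fun x => angleExcess x / c) (𝓝 0) (𝓝 0) := by
    simpa only [zero_div] using tendsto_angleExcess.div_const c
  have div_isBigO : (fun x => angleExcess x / c) =O[𝓝 0] (· ^ 3) :=
    (isBigO_div_const_self _ c _).trans angleExcess_isBigO_cube
  calc (fun x => sin (angleExcess x / c) - angleExcess x / c)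
      =O[𝓝 0] fun x => (angleExcess x / c) ^ 3 := sin_sub_self_isBigO.comp_tendsto div_tendsto
    _ =O[𝓝 0] fun x => (x ^ 3) ^ 3 := div_isBigO.pow 3
    _ =O[𝓝 0] (· ^ 7) := by
      simpa only [← pow_mul] using (isLittleO_pow_pow (by norm_num : 7 < 3 * 3)).isBigO

lemma one_sub_sq_mul_angleExcess_sub_isBigO :
    (fun x => (1 - x ^ 2 / 2) * angleExcess x - (x ^ 3 / 4 - x ^ 5 / 16)) =O[𝓝 0] (· ^ 7) := by
  have sin_error : (fun x => sin (angleExcess x) - angleExcess x) =O[𝓝 0] (· ^ 7) := by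
    simpa only [div_one] using sin_angleExcess_div_sub_isBigO 1
  have cos_isBigO_one : (fun x => cos (x - angleExcess x)) =O[𝓝 0] fun x => x ^ 0 :=
    isBigO_of_le _ fun x => by simpa using abs_cos_le_one (x - angleExcess x)
  have product : (fun x => cos (x - angleExcess x) * sin (angleExcess x) -
      (1 - x ^ 2 / 2) * angleExcess x) =O[𝓝 0] (· ^ 7) :=
    isBigO_mul_sub_mul_pow (m := 0) (n := 3) (k := 4)
      cos_isBigO_one cos_sub_angleExcess_isBigO angleExcess_isBigO_cube sin_error
  exact (sin_mul_sin_half_sq_sub_isBigO.sub product).congr_left fun x => by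
    rw [cos_mul_sin_angleExcess]; ring

-- Multiplying by `1 + x ^ 2 / 2` inverts the factor `1 - x ^ 2 / 2` up to `x ^ 4 / 4`.
lemma angleExcess_sub_quintic_isBigO :
    (fun x => angleExcess x - (x ^ 3 / 4 + x ^ 5 / 16)) =O[𝓝 0] (· ^ 7) := by
  have factor_isBigO_one : (fun x : ℝ => 1 + x ^ 2 / 2) =O[𝓝 0] fun _ => (1 : ℝ) :=
    (Continuous.tendsto (by fun_prop) 0).isBigO_one ℝ
  have inverted : (fun x => ((1 - x ^ 2 / 2) * angleExcess x - (x ^ 3 / 4 - x ^ 5 / 16)) *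
      (1 + x ^ 2 / 2)) =O[𝓝 0] (· ^ 7) :=
    (one_sub_sq_mul_angleExcess_sub_isBigO.mul factor_isBigO_one).congr_right fun x => mul_one _
  have inversion_error : (fun x => x ^ 4 * angleExcess x) =O[𝓝 0] (· ^ 7) :=
    ((isBigO_refl (fun x : ℝ => x ^ 4) _).mul angleExcess_isBigO_cube).congr_right fun x => by ring
  have truncation := isBigO_refl (fun x : ℝ => x ^ 7) (𝓝 0)
  exact ((inverted.add (inversion_error.const_mul_left (1 / 4))).sub
    (truncation.const_mul_left (1 / 32))).congr_left fun x => by ring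

lemma angleExcess_sub_cubic_isBigO :
    (fun x => angleExcess x - x ^ 3 / 4) =O[𝓝 0] (· ^ 5) := by
  have remainder := angleExcess_sub_quintic_isBigO.trans
    (isLittleO_pow_pow (by norm_num : 5 < 7)).isBigO
  exact (remainder.add ((isBigO_refl (fun x : ℝ => x ^ 5) _).const_mul_left (1 / 16))).congr_left
    fun x => by ring

lemma sin_half_add_angleExcess_sub_isBigO :
    (fun x => sin ((x + angleExcess x) / 2) - (x / 2 + 5 * x ^ 3 / 48)) =O[𝓝 0] (· ^ 5) := by
  have arg_tendsto : Tendsto (fun x => (x + angleExcess x) / 2) (𝓝 0) (𝓝 0) := by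
    simpa using (tendsto_id.add tendsto_angleExcess).div_const 2
  have half_isBigO : (fun x : ℝ => x / 2) =O[𝓝 0] (fun x => x) :=
    isBigO_div_const_self _ 2 _
  have taylor : (fun x => sin ((x + angleExcess x) / 2) -
      ((x + angleExcess x) / 2 - ((x + angleExcess x) / 2) ^ 3 / 6)) =O[𝓝 0] (· ^ 5) :=
    (sin_sub_cubic_isBigO.comp_tendsto arg_tendsto).trans (half_add_angleExcess_isBigO_self.pow 5)
  have quadratic_factor : (fun x => ((x + angleExcess x) / 2) ^ 2 +
      (x + angleExcess x) / 2 * (x / 2) + (x / 2) ^ 2) =O[𝓝 0] (· ^ 2) :=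
    ((half_add_angleExcess_isBigO_self.pow 2).add
      ((half_add_angleExcess_isBigO_self.mul half_isBigO).congr_right fun x => (sq x).symm)).add
        (half_isBigO.pow 2)
  have cube_error :
      (fun x => ((x + angleExcess x) / 2) ^ 3 - (x / 2) ^ 3) =O[𝓝 0] (· ^ 5) :=
    ((angleExcess_isBigO_cube.mul quadratic_factor).const_mul_left (1 / 2)).congr
      (fun x => by ring) fun x => by ring
  exact ((taylor.add (angleExcess_sub_cubic_isBigO.const_mul_left (1 / 2))).sub
    (cube_error.const_mul_left (1 / 6))).congr_left fun x => by ring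

lemma sin_half_angleExcess_sub_isBigO :
    (fun x => sin (angleExcess x / 2) - (x ^ 3 / 8 + x ^ 5 / 32)) =O[𝓝 0] (· ^ 7) :=
  ((sin_angleExcess_div_sub_isBigO 2).add
    (angleExcess_sub_quintic_isBigO.const_mul_left (1 / 2))).congr_left fun x => by ring

end AngleExcess

lemma cos_half_sub_cos_arcsin_eq (x : ℝ) :
    cos (x / 2) - cos (x - 1 / 2 * arcsin (1 / 2 * sin (2 * x))) =
      2 * (sin ((x + angleExcess x) / 2) * sin (angleExcess x / 2)) := by
  have angle_eq : x - 1 / 2 * arcsin (1 / 2 * sin (2 * x)) = x / 2 + angleExcess x := by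
    unfold angleExcess; ring
  rw [angle_eq, ← mul_assoc, two_mul_sin_mul_sin]
  ring_nf

lemma cos_half_sub_cos_arcsin_isBigO :
    (fun x : ℝ => cos (x / 2) - cos (x - 1 / 2 * arcsin (1 / 2 * sin (2 * x))) -
      x ^ 4 / 8 - 11 * x ^ 6 / 192) =O[𝓝 0] (· ^ 8) := by
  have sin_half_add_isBigO : (fun x => sin ((x + angleExcess x) / 2)) =O[𝓝 0] (· ^ 1) := by
    simpa only [pow_one] using (isBigO_sin_comp _ _).trans half_add_angleExcess_isBigO_self
  have quintic_isBigO : (fun x : ℝ => x ^ 3 / 8 + x ^ 5 / 32) =O[𝓝 0] (· ^ 3) :=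
    (isBigO_mul_of_continuousAt (v := fun x => 1 / 8 + x ^ 2 / 32) (· ^ 3)
      (by fun_prop)).congr_left fun x => by ring
  have product : (fun x => sin ((x + angleExcess x) / 2) * sin (angleExcess x / 2) -
      (x / 2 + 5 * x ^ 3 / 48) * (x ^ 3 / 8 + x ^ 5 / 32)) =O[𝓝 0] (· ^ 8) :=
    isBigO_mul_sub_mul_pow (m := 1) (n := 3) (k := 4) sin_half_add_isBigO
      sin_half_add_angleExcess_sub_isBigO quintic_isBigO sin_half_angleExcess_sub_isBigO
  have truncation := isBigO_refl (fun x : ℝ => x ^ 8) (𝓝 0)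
  exact ((product.const_mul_left 2).add (truncation.const_mul_left (5 / 768))).congr_left
    fun x => by rw [cos_half_sub_cos_arcsin_eq]; ring

/-- Asymptotics of the width gap for the polygon `B_n`:
`cos(π/2n) − W(B_n) = π⁴/(8 n⁴) + 11π⁶/(192 n⁶) + O(1/n⁸)` as `n → ∞`. -/
theorem width_gap_Bn_asymptotics :
    (fun n : ℕ =>
        cos (π / (2 * n)) -
          cos (π / n - (1 / 2) * arcsin ((1 / 2) * sin (2 * π / n))) -
          π ^ 4 / (8 * (n : ℝ) ^ 4) - 11 * π ^ 6 / (192 * (n : ℝ) ^ 6)) =O[atTop]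
      (fun n : ℕ => 1 / (n : ℝ) ^ 8) := by
  have gap := cos_half_sub_cos_arcsin_isBigO.comp_tendsto (tendsto_const_div_atTop_nhds_zero_nat π)
  have scale : (fun n : ℕ => (π / (n : ℝ)) ^ 8) =O[atTop] fun n : ℕ => 1 / (n : ℝ) ^ 8 :=
    (isBigO_const_mul_self (π ^ 8) _ _).congr_left fun n => by rw [div_pow, mul_one_div]
  refine (gap.trans scale).congr_left fun n => ?_
  have half_angle : π / (n : ℝ) / 2 = π / (2 * n) := by rw [div_div, mul_comm]
  have double_angle : 2 * (π / (n : ℝ)) = 2 * π / n := (mul_div_assoc _ _ _).symm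
  simp only [Function.comp_apply, half_angle, double_angle]
  ring
end

section
/- Let n ≥ 3 be an integer, let β be a real number, and let k be a positive integer. Then ∑_{j=1}^{k} (−1)^{j−1}·cos((2j−1)·π/n + (−1)^{j−1}·β) = (sin(π/n − β) + cos(2kπ/n)·sin(β − (−1)^k·π/n)) / sin(2π/n). -/
open Real Finset

/-!
After multiplication by `sin (2 * θ)`, where `θ = π / n`, the sum telescopes: with
`x = (2 * j - 1) * θ`, the `j`-th term becomes a difference of two products of a cosine and a sine,
one at `x + θ = 2 * j * θ` and the other at `x - θ = 2 * (j - 1) * θ`.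
The alternating sign is absorbed because `β ↦ -β` exchanges the even and the odd terms.
-/

theorem sin_two_mul_mul_cos_add (x θ β : ℝ) :
    sin (2 * θ) * cos (x + β) =
      cos (x + θ) * sin (β + θ) - cos (x - θ) * sin (β - θ) := by
  simp only [cos_add, cos_sub, sin_add, sin_sub, sin_two_mul]
  ring

theorem sin_two_mul_mul_neg_one_pow_mul_cos_add (x θ β : ℝ) (m : ℕ) :
    sin (2 * θ) * ((-1) ^ m * cos (x + (-1) ^ m * β)) =
      cos (x + θ) * sin (β + (-1) ^ m * θ) - cos (x - θ) * sin (β - (-1) ^ m * θ) := by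
  rcases neg_one_pow_eq_or ℝ m with even | odd
  · simpa only [even, one_mul] using sin_two_mul_mul_cos_add x θ β
  · have reflected := sin_two_mul_mul_cos_add x θ (-β)
    rw [← neg_add', neg_add_eq_sub, ← neg_sub β θ, sin_neg, sin_neg] at reflected
    simp only [odd, neg_one_mul, sub_neg_eq_add, ← sub_eq_add_neg] at reflected ⊢
    linear_combination -reflected

theorem sin_two_mul_mul_sum_neg_one_pow_mul_cos (θ β : ℝ) (k : ℕ) :
    sin (2 * θ) * ∑ i ∈ range k, (-1) ^ i * cos ((2 * i + 1) * θ + (-1) ^ i * β) =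
      sin (θ - β) + cos (2 * k * θ) * sin (β - (-1) ^ k * θ) := by
  let F (i : ℕ) : ℝ := cos (2 * i * θ) * sin (β - (-1) ^ i * θ)
  have term_eq_sub (i : ℕ) :
      sin (2 * θ) * ((-1) ^ i * cos ((2 * i + 1) * θ + (-1) ^ i * β)) = F (i + 1) - F i := by
    rw [sin_two_mul_mul_neg_one_pow_mul_cos_add]
    simp only [F]
    push_cast
    ring_nf
  have F_zero : F 0 = -sin (θ - β) := by
    simp [F, ← sin_neg]
  calc
    _ = ∑ i ∈ range k, (F (i + 1) - F i) := by simp only [mul_sum, term_eq_sub]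
    _ = F k - F 0 := sum_range_sub F k
    _ = _ := by rw [F_zero, sub_neg_eq_add, add_comm]

theorem vertex_ordinate_closed_form_general (θ β : ℝ) (hθ : sin (2 * θ) ≠ 0) (k : ℕ) :
    ∑ j ∈ Icc 1 k, (-1) ^ (j - 1) * cos ((2 * j - 1) * θ + (-1) ^ (j - 1) * β) =
      (sin (θ - β) + cos (2 * k * θ) * sin (β - (-1) ^ k * θ)) / sin (2 * θ) := by
  rw [eq_div_iff hθ, mul_comm, ← sin_two_mul_mul_sum_neg_one_pow_mul_cos,
    ← Ico_add_one_right_eq_Icc, sum_Ico_eq_sum_range, Nat.add_sub_cancel]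
  congr 1
  refine sum_congr rfl fun i _ ↦ ?_
  rw [Nat.add_sub_cancel_left]
  push_cast
  ring_nf

theorem sin_two_mul_pi_div_pos {x : ℝ} (hx : 2 < x) : 0 < sin (2 * π / x) := by
  have x_pos : 0 < x := two_pos.trans hx
  refine sin_pos_of_pos_of_lt_pi (by positivity) ?_
  rw [div_lt_iff₀ x_pos, mul_comm]
  exact mul_lt_mul_of_pos_left hx pi_pos

/-- Closed form for the ordinate of the `k`-th vertex in the construction of `B_n`:
`∑_{j=1}^{k} (−1)^{j−1} cos((2j−1)π/n + (−1)^{j−1}β)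
  = (sin(π/n − β) + cos(2kπ/n) sin(β − (−1)^k π/n)) / sin(2π/n)`. -/
theorem vertex_ordinate_closed_form (n : ℕ) (hn : 3 ≤ n) (β : ℝ) (k : ℕ) (hk : 1 ≤ k) :
    ∑ j ∈ Finset.Icc 1 k,
        (-1 : ℝ) ^ (j - 1) * cos ((2 * (j : ℝ) - 1) * π / n + (-1 : ℝ) ^ (j - 1) * β) =
      (sin (π / n - β) + cos (2 * (k : ℝ) * π / n) * sin (β - (-1 : ℝ) ^ k * (π / n))) /
        sin (2 * π / n) := by
  have sin_angle_pos := sin_two_mul_pi_div_pos (x := n) (by exact_mod_cast hn)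
  simp only [mul_div_assoc] at sin_angle_pos ⊢
  exact vertex_ordinate_closed_form_general (π / n) β sin_angle_pos.ne' k
end

section
/- Define, for a positive integer n, W_Q(n) = cos(π/(2n) + π/8 − (1/2)·arcsin(cos(π/n)/√2)). Then, as n → ∞ over the positive integers, cos(π/(2n)) − W_Q(n) = π³/(8n³) + O(1/n⁴); that is, the function n ↦ cos(π/(2n)) − cos(π/(2n) + π/8 − (1/2)·arcsin(cos(π/n)/√2)) − π³/(8n³) is O(n⁻⁴) along the filter atTop. -/
open Real Filter Asymptotics

/-!
Put `x = π / n`, and let `d` be the angle by which the argument of the cosine in `W(Q_n)` exceeds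
`x / 2`. Since `arcsin` has derivative `√2` at `√2 / 2` and `(cos x - 1) / √2 = O(x²)`, the tangent
line of `arcsin` gives `d = (1 - cos x) / 2 + O(x⁴) = x² / 4 + O(x⁴)`. The width gap is then
`cos (x / 2) - cos (x / 2 + d) = d sin (x / 2) + O(d²) = x³ / 8 + O(x⁴)`.
-/

open scoped Topology

lemma isBigO_sub_tangent_of_analyticAt {𝕜 E : Type*} [NontriviallyNormedField 𝕜]
    [NormedAddCommGroup E] [NormedSpace 𝕜 E] {f : 𝕜 → E} {f' : E} {a : 𝕜}
    (hf : AnalyticAt 𝕜 f a) (hf' : HasDerivAt f f' a) :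
    (fun x => f x - f a - (x - a) • f') =O[𝓝 a] fun x => (x - a) ^ 2 := by
  obtain ⟨p, hp⟩ := hf
  have hzero : p.coeff 0 = f a := hp.coeff_zero _
  have hone : p.coeff 1 = f' := hp.hasDerivAt.unique hf'
  have hsub : Tendsto (fun x => x - a) (𝓝 a) (𝓝 0) := by
    simpa using (continuous_sub_right a).tendsto a
  refine .of_norm_right <|
    ((hp.isBigO_sub_partialSum_pow 2).comp_tendsto hsub).congr (fun x => ?_) fun x => ?_
  · simp [FormalMultilinearSeries.partialSum, Finset.sum_range_succ, hzero, hone, sub_sub]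
  · simp

lemma isBigO_sin_sub_self : (fun x : ℝ => sin x - x) =O[𝓝 0] fun x => x ^ 2 := by
  simpa using isBigO_sub_tangent_of_analyticAt analyticAt_sin (hasDerivAt_sin 0)

lemma isBigO_cos_sub_one : (fun x : ℝ => cos x - 1) =O[𝓝 0] fun x => x ^ 2 := by
  simpa using isBigO_sub_tangent_of_analyticAt analyticAt_cos (hasDerivAt_cos 0)

lemma isBigO_cos_sub_one_sub_sq_div_two :
    (fun x : ℝ => cos x - (1 - x ^ 2 / 2)) =O[𝓝 0] fun x => x ^ 4 := by
  refine IsBigO.of_bound (5 / 96) ?_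
  filter_upwards [Metric.closedBall_mem_nhds (0 : ℝ) one_pos] with x hx
  have hx1 : |x| ≤ 1 := by simpa using hx
  simpa [mul_comm] using cos_bound hx1

lemma isBigO_cos_sub_cos_add_sub_mul_sin {α : Type*} {l : Filter α} {a d : α → ℝ}
    (hd : Tendsto d l (𝓝 0)) :
    (fun i => cos (a i) - cos (a i + d i) - d i * sin (a i)) =O[l] fun i => d i ^ 2 := by
  have hcos : (fun i => cos (a i)) =O[l] fun _ => (1 : ℝ) :=
    .of_norm_le fun i => abs_cos_le_one (a i)
  have hsin : (fun i => sin (a i)) =O[l] fun _ => (1 : ℝ) :=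
    .of_norm_le fun i => abs_sin_le_one (a i)
  have h := (hsin.mul (isBigO_sin_sub_self.comp_tendsto hd)).sub
    (hcos.mul (isBigO_cos_sub_one.comp_tendsto hd))
  refine h.congr (fun i => ?_) fun i => one_mul _
  simp only [Function.comp_apply, cos_add]
  ring

lemma isBigO_arcsin_sub_tangent {θ : ℝ} (hθ : θ ∈ Set.Ioo (-(π / 2)) (π / 2)) :
    (fun y => arcsin y - θ - (y - sin θ) / cos θ) =O[𝓝 (sin θ)] fun y => (y - sin θ) ^ 2 := by
  have hcos : 0 < cos θ := cos_pos_of_mem_Ioo hθ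
  have hne_neg_one : sin θ ≠ -1 := fun h => by nlinarith [sin_sq_add_cos_sq θ]
  have hne_one : sin θ ≠ 1 := fun h => by nlinarith [sin_sq_add_cos_sq θ]
  have hderiv : HasDerivAt arcsin (1 / cos θ) (sin θ) := by
    rw [cos_eq_sqrt_one_sub_sin_sq hθ.1.le hθ.2.le]
    exact hasDerivAt_arcsin hne_neg_one hne_one
  have hanalytic : AnalyticAt ℝ arcsin (sin θ) :=
    (contDiffAt_arcsin hne_neg_one hne_one).analyticAt
  simpa [arcsin_sin hθ.1.le hθ.2.le, div_eq_mul_inv] using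
    isBigO_sub_tangent_of_analyticAt hanalytic hderiv

/-- The angle by which the argument of the cosine in `W(Q_n)` exceeds `π / (2n)`, as a function of
`x = π / n`. -/
noncomputable def excessAngle (x : ℝ) : ℝ :=
  π / 8 - 1 / 2 * arcsin (cos x / √2)

lemma isBigO_excessAngle_sub_one_sub_cos_div_two :
    (fun x => excessAngle x - (1 - cos x) / 2) =O[𝓝 0] fun x => x ^ 4 := by
  have hmem : π / 4 ∈ Set.Ioo (-(π / 2)) (π / 2) := by constructor <;> linarith [pi_pos]
  have hsub (x : ℝ) : cos x / √2 - sin (π / 4) = (cos x - 1) * cos (π / 4) := by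
    rw [sin_pi_div_four, cos_pi_div_four, sqrt_div_self]
    ring
  have htangent (x : ℝ) : (cos x / √2 - sin (π / 4)) / cos (π / 4) = cos x - 1 := by
    rw [hsub, mul_div_cancel_right₀ _ (cos_pos_of_mem_Ioo hmem).ne']
  have hlim : Tendsto (fun x => cos x / √2) (𝓝 0) (𝓝 (sin (π / 4))) := by
    simpa [sin_pi_div_four, sqrt_div_self] using (continuous_cos.div_const √2).tendsto 0
  have hsq : (fun x => (cos x / √2 - sin (π / 4)) ^ 2) =O[𝓝 0] fun x => x ^ 4 :=
    ((isBigO_cos_sub_one.pow 2).const_mul_left (cos (π / 4) ^ 2)).congr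
      (fun x => by rw [hsub]; ring) fun x => by ring
  have harcsin : (fun x => arcsin (cos x / √2) - π / 4 - (cos x - 1)) =O[𝓝 0] fun x => x ^ 4 := by
    simpa only [Function.comp_def, htangent] using
      ((isBigO_arcsin_sub_tangent hmem).comp_tendsto hlim).trans hsq
  refine (harcsin.const_mul_left (-1 / 2)).congr_left fun x => ?_
  rw [excessAngle]
  ring

lemma isBigO_excessAngle_sub_sq_div_four :
    (fun x => excessAngle x - x ^ 2 / 4) =O[𝓝 0] fun x => x ^ 4 :=
  (isBigO_excessAngle_sub_one_sub_cos_div_two.sub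
    (isBigO_cos_sub_one_sub_sq_div_two.const_mul_left (1 / 2))).congr_left fun x => by ring

lemma isBigO_excessAngle : excessAngle =O[𝓝 0] fun x => x ^ 2 := by
  have hpow : (fun x : ℝ => x ^ 4) =O[𝓝 0] fun x => x ^ 2 :=
    (isLittleO_pow_pow (by norm_num)).isBigO
  exact ((isBigO_excessAngle_sub_sq_div_four.trans hpow).add
    (isBigO_const_mul_self (1 / 4) (fun x => x ^ 2) (𝓝 0))).congr_left fun x => by ring

lemma isBigO_excessAngle_mul_sin_half_sub_cube_div_eight :
    (fun x => excessAngle x * sin (x / 2) - x ^ 3 / 8) =O[𝓝 0] fun x => x ^ 4 := by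
  have hhalf : Tendsto (fun x : ℝ => x / 2) (𝓝 0) (𝓝 0) := by
    simpa using (continuous_id.div_const (2 : ℝ)).tendsto 0
  have hangle : (fun x => (excessAngle x - x ^ 2 / 4) * sin (x / 2)) =O[𝓝 0] fun x => x ^ 4 := by
    have hsin : (fun x => sin (x / 2)) =O[𝓝 0] fun _ => (1 : ℝ) :=
      .of_norm_le fun x => abs_sin_le_one (x / 2)
    simpa only [mul_one] using isBigO_excessAngle_sub_sq_div_four.mul hsin
  have hsin_sub : (fun x => sin (x / 2) - x / 2) =O[𝓝 0] fun x => x ^ 2 :=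
    (isBigO_sin_sub_self.comp_tendsto hhalf).trans <|
      (isBigO_const_mul_self (1 / 4) (fun x => x ^ 2) _).congr_left fun x => by
        simp only [Function.comp_apply]
        ring
  have hlinear : (fun x => x ^ 2 / 4 * (sin (x / 2) - x / 2)) =O[𝓝 0] fun x => x ^ 4 :=
    ((isBigO_const_mul_self (1 / 4) (fun x => x ^ 2) _).mul hsin_sub).congr
      (fun x => by ring) fun x => by ring
  exact (hangle.add hlinear).congr_left fun x => by ring

lemma isBigO_cos_half_sub_cos_half_add_excessAngle_sub_cube_div_eight :
    (fun x => cos (x / 2) - cos (x / 2 + excessAngle x) - x ^ 3 / 8) =O[𝓝 0]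
      fun x => x ^ 4 := by
  have hlim : Tendsto excessAngle (𝓝 0) (𝓝 0) :=
    isBigO_excessAngle.trans_tendsto (by simpa using (continuous_pow 2).tendsto (0 : ℝ))
  have hsq : (fun x => excessAngle x ^ 2) =O[𝓝 0] fun x => x ^ 4 :=
    (isBigO_excessAngle.pow 2).congr_right fun x => by ring
  exact ((isBigO_cos_sub_cos_add_sub_mul_sin hlim).trans hsq).add
    isBigO_excessAngle_mul_sin_half_sub_cube_div_eight |>.congr_left fun x => by ring

theorem width_gap_Qn_asymptotics_general :
    (fun x : ℝ =>
        cos (π / (2 * x)) -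
          cos (π / (2 * x) + π / 8 - (1 / 2) * arcsin (cos (π / x) / √2)) -
          π ^ 3 / (8 * x ^ 3)) =O[Bornology.cobounded ℝ]
      fun x => 1 / x ^ 4 := by
  have hlim : Tendsto (fun x => π / x) (Bornology.cobounded ℝ) (𝓝 0) := by
    simpa [div_eq_mul_inv] using (tendsto_inv₀_cobounded (α := ℝ)).const_mul π
  have hpow : (fun x => (π / x) ^ 4) =O[Bornology.cobounded ℝ] fun x => 1 / x ^ 4 :=
    (isBigO_const_mul_self (π ^ 4) _ _).congr_left fun x => by ring
  have hgap := isBigO_cos_half_sub_cos_half_add_excessAngle_sub_cube_div_eight.comp_tendsto hlim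
  refine (hgap.trans hpow).congr_left fun x => ?_
  simp only [Function.comp_apply, excessAngle]
  ring_nf

/-- Asymptotics of the width gap for the polygon `Q_n`:
`cos(π/2n) − W(Q_n) = π³/(8 n³) + O(1/n⁴)` as `n → ∞`. -/
theorem width_gap_Qn_asymptotics :
    (fun n : ℕ =>
        cos (π / (2 * n)) -
          cos (π / (2 * n) + π / 8 - (1 / 2) * arcsin (cos (π / n) / Real.sqrt 2)) -
          π ^ 3 / (8 * (n : ℝ) ^ 3)) =O[atTop]
      (fun n : ℕ => 1 / (n : ℝ) ^ 4) :=
  width_gap_Qn_asymptotics_general.comp_tendsto tendsto_natCast_atTop_cobounded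
end
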